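/- arXiv:1208.1075 — 2 statements merged into one kernel-verified Lean document; each statement's English description precedes it below -/
import Mathlib

section
/- For every nonnegative integer n, the number of Motzkin n-paths equals the number of permutations of length n+1 that avoid 132 and avoid the hatted pattern 21̂3; that is, there is a bijection between Motzkin n-paths and S_{n+1}(132, 21̂3). -/
/-- `π` avoids the pattern 132: no subsequence `π_a π_b π_c` (`a < b < c`) satisfies
`π_a < π_c < π_b`. -/
def Avoids132 {n : ℕ} (π : Equiv.Perm (Fin n)) : Prop :=
  ¬ ∃ a b c : Fin n, a < b ∧ b < c ∧ π a < π c ∧ π c < π b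


/-- `g` is an occurrence of the pattern `τ` in `π`: the indices `g a` are increasing and the
subsequence `π (g 0), …, π (g k)` is order-isomorphic to (i.e. has reduction) `τ`. -/
def IsOcc {k n : ℕ} (τ : Equiv.Perm (Fin k)) (π : Equiv.Perm (Fin n)) (g : Fin k → Fin n) : Prop :=
  StrictMono g ∧ ∀ a b : Fin k, τ a < τ b ↔ π (g a) < π (g b)

/-- `π` avoids the hatted pattern `τ̂_(i)` (the pattern `τ ∈ S_{k+1}` with its `i`-th entry
marked): every `k`-element subsequence of `π` whose reduction is `red(τ∖τ_i)` (which is encoded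
by the order-isomorphism condition with `τ ∘ i.succAbove`) can be extended, by adjoining one
further entry of `π` at some position, to a `(k+1)`-element subsequence with reduction `τ`. -/
def AvoidsHat {k n : ℕ} (τ : Equiv.Perm (Fin (k + 1))) (i : Fin (k + 1))
    (π : Equiv.Perm (Fin n)) : Prop :=
  ∀ g : Fin k → Fin n, StrictMono g →
    (∀ a b : Fin k, τ (i.succAbove a) < τ (i.succAbove b) ↔ π (g a) < π (g b)) →
    ∃ h : Fin (k + 1) → Fin n, IsOcc τ π h ∧ Set.range g ⊆ Set.range h

/-- `w` is a Motzkin `n`-path: a word of length `n` over the alphabet `{u, d, f}`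
(`some true` = up, `some false` = down, `none` = flat) in which every prefix contains at least
as many `u`'s as `d`'s and the total number of `u`'s equals the total number of `d`'s. -/
def IsMotzkinWord (n : ℕ) (w : List (Option Bool)) : Prop :=
  w.length = n ∧
    (∀ p : ℕ, (w.take p).count (some false) ≤ (w.take p).count (some true)) ∧
    w.count (some true) = w.count (some false)

/-!
In a permutation avoiding 132, every pair `i < j` with `π i < π j` extends to an occurrence of 213
unless `π (i + 1) = π i + 1`, in which case `(i, i + 1)` itself does not extend. Avoiding `21̂3`
thus amounts to having no two adjacent entries of the form `a, a + 1`.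

A permutation avoiding 132 is determined by the shape of its decreasing tree, an arbitrary binary
tree. An entry followed by its successor in value corresponds to a left child without right child:
the left subtree of `m` carries the largest values below `m`, its root being `m - 1`, which is
adjacent to `m` exactly if that root has no right child. Trees on `n + 1` nodes in which every left
child has a right child decompose in the same way as Motzkin `n`-paths do under `f a` and `u a d b`.
-/

open BinaryTree List

/-- `w` leads from height `h` down to height `0` without going below `0`, so that a Motzkin
`n`-path is such a word of length `n` with `h = 0`. -/
def IsPathFrom (h : ℕ) (w : List (Option Bool)) : Prop :=
  (∀ p : ℕ, (w.take p).count (some false) ≤ h + (w.take p).count (some true)) ∧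
    h + w.count (some true) = w.count (some false)

theorem isMotzkinWord_iff_isPathFrom_zero {n : ℕ} {w : List (Option Bool)} :
    IsMotzkinWord n w ↔ w.length = n ∧ IsPathFrom 0 w := by
  simp [IsMotzkinWord, IsPathFrom]

section IsPathFrom

variable {h : ℕ} {w : List (Option Bool)}

theorem isPathFrom_nil : IsPathFrom h [] ↔ h = 0 := by
  simp [IsPathFrom]

theorem isPathFrom_flat_cons : IsPathFrom h (none :: w) ↔ IsPathFrom h w := by
  simp [IsPathFrom, ← Nat.and_forall_add_one (p := fun p ↦ count _ (take p (_ :: _)) ≤ _)]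

theorem isPathFrom_up_cons : IsPathFrom h (some true :: w) ↔ IsPathFrom (h + 1) w := by
  simp [IsPathFrom, ← Nat.and_forall_add_one (p := fun p ↦ count _ (take p (_ :: _)) ≤ _),
    Nat.add_assoc, Nat.add_comm 1]

theorem isPathFrom_succ_down_cons : IsPathFrom (h + 1) (some false :: w) ↔ IsPathFrom h w := by
  simp [IsPathFrom, ← Nat.and_forall_add_one (p := fun p ↦ count _ (take p (_ :: _)) ≤ _),
    Nat.add_right_comm h 1]

theorem not_isPathFrom_zero_down_cons : ¬ IsPathFrom 0 (some false :: w) := fun hw ↦ by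
  simpa using hw.1 1

end IsPathFrom

/-- The syntax trees of Motzkin paths: a path is empty, or a flat step followed by a path, or
`u a d b` with paths `a` and `b`. -/
inductive MotzkinTree
  | nil : MotzkinTree
  | flat (t : MotzkinTree) : MotzkinTree
  | arch (a b : MotzkinTree) : MotzkinTree

namespace MotzkinTree

/-- The number of steps of the path with syntax tree `t`. -/
def size : MotzkinTree → ℕ
  | nil => 0
  | flat t => t.size + 1
  | arch a b => a.size + b.size + 2

/-- The Motzkin path with syntax tree `t`. -/
def word : MotzkinTree → List (Option Bool)
  | nil => []
  | flat t => none :: t.word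
  | arch a b => some true :: (a.word ++ some false :: b.word)

theorem length_word (t : MotzkinTree) : t.word.length = t.size := by
  induction t with
  | nil => rfl
  | flat t ih => simp [word, size, ih]
  | arch a b iha ihb => simp only [word, size, length_cons, length_append, iha, ihb]; omega

theorem isPathFrom_word_append (t : MotzkinTree) {h : ℕ} {w : List (Option Bool)} :
    IsPathFrom h (t.word ++ w) ↔ IsPathFrom h w := by
  induction t generalizing h w with
  | nil => rfl
  | flat t ih => rw [word, cons_append, isPathFrom_flat_cons, ih]
  | arch a b iha ihb =>
    rw [word, cons_append, isPathFrom_up_cons, append_assoc, iha, cons_append,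
      isPathFrom_succ_down_cons, ihb]

theorem isPathFrom_zero_word (t : MotzkinTree) : IsPathFrom 0 t.word := by
  simpa using t.isPathFrom_word_append.2 (isPathFrom_nil.2 rfl)

/-- The unique factorisation `t₀ d t₁ d ⋯ d tₕ` of a word descending from height `h` into Motzkin
paths, returned as `(t₀, [t₁, …, tₕ])`. The value is junk if the word has an unmatched `u`. -/
def parse : List (Option Bool) → MotzkinTree × List MotzkinTree
  | [] => (nil, [])
  | none :: w => (flat (parse w).1, (parse w).2)
  | some false :: w => (nil, (parse w).1 :: (parse w).2)
  | some true :: w =>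
    match parse w with
    | (a, b :: s) => (arch a b, s)
    | (_, []) => (nil, [])

theorem parse_word_append (t : MotzkinTree) {w : List (Option Bool)} (hw : (parse w).1 = nil) :
    parse (t.word ++ w) = (t, (parse w).2) := by
  induction t generalizing w with
  | nil => exact Prod.ext hw rfl
  | flat t ih => simp [word, parse, ih hw]
  | arch a b iha ihb => simp [word, parse, ihb hw, iha]

theorem word_injective : Function.Injective word :=
  Function.LeftInverse.injective (g := fun w ↦ (parse w).1) fun t ↦ by
    simpa using congrArg Prod.fst (t.parse_word_append (w := []) rfl)

theorem word_append_flatMap_parse {h : ℕ} {w : List (Option Bool)} (hw : IsPathFrom h w) :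
    (parse w).2.length = h ∧
      (parse w).1.word ++ (parse w).2.flatMap (fun t ↦ some false :: t.word) = w := by
  induction w generalizing h with
  | nil => simp [parse, word, isPathFrom_nil.1 hw]
  | cons s w ih =>
    match s, h with
    | none, h => simpa [parse, word] using ih (isPathFrom_flat_cons.1 hw)
    | some false, 0 => exact absurd hw not_isPathFrom_zero_down_cons
    | some false, h + 1 => simpa [parse, word] using ih (isPathFrom_succ_down_cons.1 hw)
    | some true, h =>
      obtain ⟨hlen, hword⟩ := ih (isPathFrom_up_cons.1 hw)
      obtain ⟨b, s, hs⟩ := exists_cons_of_length_eq_add_one hlen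
      have hparse : parse w = ((parse w).1, b :: s) := Prod.ext rfl hs
      rw [hs] at hlen hword
      rw [parse, hparse]
      simpa [word] using And.intro (Nat.succ.inj hlen) hword

theorem bijOn_word (n : ℕ) :
    Set.BijOn word {t | t.size = n} {w | IsMotzkinWord n w} := by
  refine ⟨fun t ht ↦ ?_, word_injective.injOn, fun w hw ↦ ?_⟩
  · exact isMotzkinWord_iff_isPathFrom_zero.2 ⟨t.length_word.trans ht, t.isPathFrom_zero_word⟩
  · obtain ⟨hn, hpath⟩ := isMotzkinWord_iff_isPathFrom_zero.1 hw
    obtain ⟨hlen, hword⟩ := word_append_flatMap_parse hpath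
    rw [length_eq_zero_iff.1 hlen, flatMap_nil, append_nil] at hword
    exact ⟨(parse w).1, (length_word _).symm.trans ((congrArg length hword).trans hn), hword⟩

end MotzkinTree

/-- Every left child in `t` has itself a right child. These are the shapes of the decreasing trees
of the permutations avoiding 132 and `21̂3`. -/
def LeftChildrenBranchRight : BinaryTree Unit → Prop
  | .nil => True
  | .node _ l r =>
    LeftChildrenBranchRight l ∧ LeftChildrenBranchRight r ∧ (l ≠ .nil → l.right ≠ .nil)

namespace MotzkinTree

/-- The left and right subtrees of `t.toBinaryTree`. -/
def children : MotzkinTree → BinaryTree Unit × BinaryTree Unit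
  | nil => (.nil, .nil)
  | flat t => (.nil, t.children.1 △ t.children.2)
  | arch a b => (b.children.1 △ (a.children.1 △ a.children.2), b.children.2)

/-- The binary tree with `n + 1` nodes encoding a Motzkin `n`-path: a flat step puts a root above
the tree as its right subtree, and `u a d b` inserts a node above the left subtree of the tree of
`b`, with the tree of `a` as right subtree. -/
def toBinaryTree (t : MotzkinTree) : BinaryTree Unit :=
  t.children.1 △ t.children.2

/-- The inverse of `children`; its value is junk if the left tree has no right subtree. -/
def ofChildren : BinaryTree Unit → BinaryTree Unit → MotzkinTree
  | .nil, .nil => nil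
  | .nil, .node _ l r => flat (ofChildren l r)
  | .node _ _ .nil, _ => nil
  | .node _ l (.node _ l' r'), r => arch (ofChildren l' r') (ofChildren l r)
termination_by l r => l.numNodes + r.numNodes
decreasing_by all_goals simp only [numNodes]; omega

theorem numNodes_toBinaryTree (t : MotzkinTree) : t.toBinaryTree.numNodes = t.size + 1 := by
  induction t with
  | nil => rfl
  | flat t ih => simpa [toBinaryTree, children, size] using ih
  | arch a b iha ihb => simp only [toBinaryTree, children, size, numNodes] at iha ihb ⊢; omega

theorem leftChildrenBranchRight_toBinaryTree (t : MotzkinTree) :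
    LeftChildrenBranchRight t.toBinaryTree := by
  induction t with
  | nil => simp [toBinaryTree, children, LeftChildrenBranchRight]
  | flat t ih => simpa [toBinaryTree, children, LeftChildrenBranchRight] using ih
  | arch a b iha ihb =>
    exact ⟨⟨ihb.1, iha, ihb.2.2⟩, ihb.2.1, fun _ ↦ by simp [children, BinaryTree.right]⟩

theorem ofChildren_children (t : MotzkinTree) : ofChildren t.children.1 t.children.2 = t := by
  induction t with
  | nil => simp [children, ofChildren]
  | flat t ih => simp [children, ofChildren, ih]
  | arch a b iha ihb => simp [children, ofChildren, iha, ihb]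

theorem children_ofChildren {l r : BinaryTree Unit} (h : LeftChildrenBranchRight (l △ r)) :
    (ofChildren l r).children = (l, r) := by
  fun_induction ofChildren l r with
  | case1 => rfl
  | case2 _ l r ih => simp [children, ih h.2.1]
  | case3 => exact absurd rfl (h.2.2 (by simp))
  | case4 _ l _ l' r' r ih' ih =>
    obtain ⟨⟨hl, hr', hlr⟩, hr, -⟩ := h
    simp [children, ih' hr', ih ⟨hl, hr, hlr⟩]

theorem bijOn_toBinaryTree (n : ℕ) : Set.BijOn toBinaryTree {t | t.size = n}
    {t | LeftChildrenBranchRight t ∧ t.numNodes = n + 1} := by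
  refine ⟨fun t ht ↦ ⟨t.leftChildrenBranchRight_toBinaryTree, ?_⟩, fun t _ t' _ h ↦ ?_, ?_⟩
  · rw [numNodes_toBinaryTree, ht]
  · rw [toBinaryTree, toBinaryTree, BinaryTree.node.injEq] at h
    rw [← ofChildren_children t, ← ofChildren_children t', h.2.1, h.2.2]
  · rintro (_ | ⟨_, l, r⟩) ⟨hlr, hn⟩
    · simp at hn
    · have h : (ofChildren l r).toBinaryTree = l △ r := by
        rw [toBinaryTree, children_ofChildren hlr]
      refine ⟨ofChildren l r, ?_, h⟩
      have := numNodes_toBinaryTree (ofChildren l r)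
      rw [h, hn] at this
      exact (Nat.succ.inj this).symm

end MotzkinTree

section Pattern

variable {α : Type*}

/-- The list `l` avoids the pattern 132. -/
def ListAvoids132 [LT α] (l : List α) : Prop :=
  l.Triplewise fun a b c ↦ ¬ (a < c ∧ c < b)

variable [LinearOrder α]

theorem listAvoids132_append_cons {L R : List α} {m : α} (hL : ∀ x ∈ L, x < m)
    (hR : ∀ x ∈ R, x < m) (hLR : Disjoint L R) :
    ListAvoids132 (L ++ m :: R) ↔
      ListAvoids132 L ∧ ListAvoids132 R ∧ ∀ x ∈ L, ∀ y ∈ R, y < x := by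
  have hne : ∀ x ∈ L, ∀ y ∈ R, x ≠ y := fun x hx y hy h ↦ hLR hx (h ▸ hy)
  simp only [ListAvoids132, triplewise_append, triplewise_cons, pairwise_cons, mem_cons]
  constructor
  · rintro ⟨avL, ⟨-, avR⟩, hLmR, -⟩
    refine ⟨avL, avR, fun x hx y hy ↦ ?_⟩
    have hyx : y ≤ x := not_lt.1 fun hxy ↦ (hLmR x hx).1 y hy ⟨hxy, hR y hy⟩
    exact hyx.lt_of_ne' (hne x hx y hy)
  · rintro ⟨avL, avR, hRL⟩
    refine ⟨avL, ⟨?_, avR⟩, fun x hx ↦ ⟨fun y hy h ↦ (hRL x hx y hy).not_gt h.1, ?_⟩, ?_⟩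
    · exact pairwise_of_forall_mem_list fun b _ c hc h ↦ (hR c hc).not_gt h.1
    · exact pairwise_of_forall_mem_list fun b _ c hc h ↦ (hRL x hx c hc).not_gt h.1
    · rintro c (rfl | hc)
      · exact pairwise_of_forall_mem_list fun a _ b hb h ↦ (hL b hb).not_gt h.2
      · exact pairwise_of_forall_mem_list fun a ha b _ h ↦ (hRL a ha c hc).not_gt h.1

theorem perm_and_perm_of_append_perm_append {L₁ L₂ M₁ M₂ : List α} (h : L₁ ++ L₂ ~ M₁ ++ M₂)
    (hlen : L₁.length = M₁.length) (hL : ∀ x ∈ L₁, ∀ y ∈ L₂, x < y)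
    (hM : ∀ x ∈ M₁, ∀ y ∈ M₂, x < y) : L₁ ~ M₁ ∧ L₂ ~ M₂ := by
  have sorted {A B : List α} (hAB : ∀ x ∈ A, ∀ y ∈ B, x < y) :
      (A.insertionSort (· ≤ ·) ++ B.insertionSort (· ≤ ·)).Pairwise (· ≤ ·) :=
    pairwise_append.2 ⟨pairwise_insertionSort _ _, pairwise_insertionSort _ _, fun x hx y hy ↦
      (hAB x ((mem_insertionSort _).1 hx) y ((mem_insertionSort _).1 hy)).le⟩
  have sort_append_perm (A B : List α) :
      A.insertionSort (· ≤ ·) ++ B.insertionSort (· ≤ ·) ~ A ++ B :=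
    (perm_insertionSort _ A).append (perm_insertionSort _ B)
  have hperm := (sort_append_perm L₁ L₂).trans (h.trans (sort_append_perm M₁ M₂).symm)
  have heq := hperm.eq_of_pairwise' (sorted hL) (sorted hM)
  obtain ⟨h₁, h₂⟩ := append_inj heq (by simpa using hlen)
  exact ⟨(perm_insertionSort _ L₁).symm.trans (h₁ ▸ perm_insertionSort _ M₁),
    (perm_insertionSort _ L₂).symm.trans (h₂ ▸ perm_insertionSort _ M₂)⟩

end Pattern

/-- No entry of `l` is followed immediately by its successor in value. -/
def SuccessionFree (l : List ℕ) : Prop :=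
  l.IsChain fun a b ↦ a + 1 ≠ b

/-- The one-line notation of the 132-avoiding permutation of `{k, …, k + t.numNodes - 1}` with
decreasing tree `t`: the root carries the largest value, its left subtree the next largest ones, and
the tree is read in order. -/
def inorder132 : BinaryTree Unit → ℕ → List ℕ
  | .nil, _ => []
  | .node _ l r, k =>
    inorder132 l (k + r.numNodes) ++ (k + r.numNodes + l.numNodes) :: inorder132 r k

theorem inorder132_perm_range' (t : BinaryTree Unit) (k : ℕ) :
    inorder132 t k ~ range' k t.numNodes := by
  induction t generalizing k with
  | nil => rfl
  | node _ l r ihl ihr =>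
    calc inorder132 l (k + r.numNodes) ++ (k + r.numNodes + l.numNodes) :: inorder132 r k
      _ ~ range' (k + r.numNodes) l.numNodes ++ (k + r.numNodes + l.numNodes) ::
            range' k r.numNodes := (ihl _).append ((ihr k).cons _)
      _ ~ (range' k r.numNodes ++ range' (k + r.numNodes) l.numNodes) ++
            [k + (r.numNodes + l.numNodes)] := by
        rw [append_assoc, ← Nat.add_assoc, append_cons]
        exact perm_append_comm
      _ = range' k (l.numNodes + r.numNodes + 1) := by
        rw [range'_append_1, ← range'_1_concat, Nat.add_comm r.numNodes]

theorem length_inorder132 (t : BinaryTree Unit) (k : ℕ) :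
    (inorder132 t k).length = t.numNodes := by
  simpa using (inorder132_perm_range' t k).length_eq

theorem mem_inorder132 {t : BinaryTree Unit} {k x : ℕ} :
    x ∈ inorder132 t k ↔ k ≤ x ∧ x < k + t.numNodes := by
  rw [(inorder132_perm_range' t k).mem_iff, mem_range'_1]

theorem inorder132_injective (k : ℕ) : Function.Injective (inorder132 · k) := by
  intro t t' h
  induction t generalizing t' k with
  | nil => cases t' with
    | nil => rfl
    | node => simp [inorder132] at h
  | node _ l r ihl ihr => cases t' with
    | nil => simp [inorder132] at h
    | node _ l' r' =>
      have hlen := congrArg List.length h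
      simp only [length_inorder132, numNodes] at hlen
      simp only [inorder132] at h
      rw [show k + r'.numNodes + l'.numNodes = k + r.numNodes + l.numNodes by omega,
        append_cons_inj_of_notMem (by simp [mem_inorder132])
          (by simp [mem_inorder132, Nat.add_assoc])] at h
      obtain ⟨hl, -, hr⟩ := h
      obtain rfl := ihr k hr
      rw [ihl _ hl]

theorem listAvoids132_inorder132 (t : BinaryTree Unit) (k : ℕ) :
    ListAvoids132 (inorder132 t k) := by
  induction t generalizing k with
  | nil => exact .nil
  | node _ l r ihl ihr =>
    rw [inorder132, listAvoids132_append_cons]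
    · refine ⟨ihl _, ihr _, fun x hx y hy ↦ ?_⟩
      rw [mem_inorder132] at hx hy
      omega
    · exact fun x hx ↦ (mem_inorder132.1 hx).2
    · exact fun x hx ↦ (mem_inorder132.1 hx).2.trans_le (Nat.le_add_right _ _)
    · intro x hx hx'
      rw [mem_inorder132] at hx hx'
      omega

theorem exists_inorder132_eq {l : List ℕ} {k : ℕ} (hl : l ~ range' k l.length)
    (h132 : ListAvoids132 l) : ∃ t, inorder132 t k = l := by
  induction hn : l.length using Nat.strong_induction_on generalizing l k with | _ n ih
  rcases n with - | n
  · exact ⟨.nil, (length_eq_zero_iff.1 hn).symm⟩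
  rw [hn, range'_1_concat] at hl
  obtain ⟨L, R, rfl⟩ := append_of_mem (hl.mem_iff.2 (mem_append_right _ (mem_singleton_self _)))
  have hLR : L ++ R ~ range' k n :=
    (perm_middle.symm.trans (hl.trans perm_append_comm)).cons_inv
  have hlt : ∀ x ∈ L ++ R, x < k + n := fun x hx ↦ (mem_range'_1.1 (hLR.mem_iff.1 hx)).2
  have hdisj := disjoint_of_nodup_append (hLR.nodup_iff.2 (nodup_range' (step := 1)))
  obtain ⟨avL, avR, hRL⟩ := (listAvoids132_append_cons (fun x hx ↦ hlt x (mem_append_left _ hx))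
    (fun x hx ↦ hlt x (mem_append_right _ hx)) hdisj).1 h132
  have hlen : n = R.length + L.length := by simp only [length_append, length_cons] at hn; omega
  have hsplit : R ++ L ~ range' k R.length ++ range' (k + R.length) L.length := by
    rw [range'_append_1, ← hlen]
    exact perm_append_comm.trans hLR
  obtain ⟨hR, hL⟩ := perm_and_perm_of_append_perm_append hsplit length_range'.symm
    (fun y hy x hx ↦ hRL x hx y hy) fun x hx y hy ↦
      (mem_range'_1.1 hx).2.trans_le (mem_range'_1.1 hy).1
  obtain ⟨r, rfl⟩ := ih _ (by omega) hR avR rfl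
  obtain ⟨l, hl⟩ := ih _ (by omega) hL avL rfl
  rw [length_inorder132] at hl
  subst hl
  refine ⟨l △ r, ?_⟩
  rw [inorder132, hlen, length_inorder132, length_inorder132, Nat.add_assoc]

theorem getLast?_inorder132_succ_ne_iff (t : BinaryTree Unit) (k : ℕ) :
    (∀ x ∈ (inorder132 t k).getLast?, x + 1 ≠ k + t.numNodes) ↔ (t ≠ .nil → t.right ≠ .nil) := by
  rcases t with - | ⟨_, l, - | ⟨_, l', r'⟩⟩
  · simp [inorder132]
  · simp [inorder132, BinaryTree.right, Nat.add_assoc]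
  · simp only [inorder132.eq_2 k _ l]
    rw [getLast?_append_cons, getLast?_cons_of_ne_nil (by simp [inorder132])]
    simp only [ne_eq, reduceCtorEq, not_false_eq_true, BinaryTree.right, imp_self, iff_true]
    intro x hx
    have := (mem_inorder132.1 (mem_of_mem_getLast? hx)).2
    simp only [numNodes] at this ⊢
    omega

theorem successionFree_inorder132_iff (t : BinaryTree Unit) (k : ℕ) :
    SuccessionFree (inorder132 t k) ↔ LeftChildrenBranchRight t := by
  induction t generalizing k with
  | nil => simp [inorder132, SuccessionFree, LeftChildrenBranchRight]
  | node _ l r ihl ihr =>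
    have hhead : ∀ y ∈ (inorder132 r k).head?, k + r.numNodes + l.numNodes + 1 ≠ y := by
      intro y hy
      have := (mem_inorder132.1 (mem_of_mem_head? hy)).2
      omega
    simp only [SuccessionFree] at ihl ihr ⊢
    rw [inorder132, isChain_append, isChain_cons, ihl, ihr, LeftChildrenBranchRight,
      ← getLast?_inorder132_succ_ne_iff l (k + r.numNodes)]
    simp only [head?_cons, Option.mem_some_iff, forall_eq', and_iff_right hhead]

theorem bijOn_inorder132 (n : ℕ) : Set.BijOn (inorder132 · 0)
    {t | LeftChildrenBranchRight t ∧ t.numNodes = n}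
    {l | l ~ range n ∧ ListAvoids132 l ∧ SuccessionFree l} := by
  refine ⟨?_, (inorder132_injective 0).injOn, ?_⟩
  · rintro t ⟨ht, rfl⟩
    exact ⟨range_eq_range' ▸ inorder132_perm_range' t 0, listAvoids132_inorder132 t 0,
      (successionFree_inorder132_iff t 0).2 ht⟩
  · rintro l ⟨hl, h132, hsucc⟩
    have hlen : l.length = n := by simpa using hl.length_eq
    obtain ⟨t, rfl⟩ := exists_inorder132_eq (by rwa [hlen, ← range_eq_range']) h132
    exact ⟨t, ⟨(successionFree_inorder132_iff t 0).1 hsucc, by rw [← hlen, length_inorder132]⟩, rfl⟩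

section OneLine

variable {n : ℕ}

theorem isOcc_213_iff {π : Equiv.Perm (Fin n)} {h : Fin 3 → Fin n} :
    IsOcc (Equiv.swap 0 1) π h ↔
      h 0 < h 1 ∧ h 1 < h 2 ∧ π (h 1) < π (h 0) ∧ π (h 0) < π (h 2) := by
  constructor
  · rintro ⟨hmono, hord⟩
    exact ⟨hmono (by decide), hmono (by decide), (hord 1 0).1 (by decide),
      (hord 0 2).1 (by decide)⟩
  · rintro ⟨h01, h12, h10, h02⟩
    refine ⟨Fin.strictMono_iff_lt_succ.2 ?_, ?_⟩
    · simp [Fin.forall_fin_succ, h01, h12]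
    · have := h10.trans h02
      simp [Fin.forall_fin_succ, Equiv.swap_apply_def, h10, h02, this, h10.le, h02.le, this.le]

theorem reduction_12_iff {π : Equiv.Perm (Fin n)} {g : Fin 2 → Fin n} :
    (∀ a b : Fin 2, Equiv.swap (0 : Fin 3) 1 (Fin.succAbove 1 a) <
      Equiv.swap (0 : Fin 3) 1 (Fin.succAbove 1 b) ↔ π (g a) < π (g b)) ↔ π (g 0) < π (g 1) := by
  refine ⟨fun h ↦ (h 0 1).1 (by decide), fun h ↦ ?_⟩
  simp [Fin.forall_fin_two, Equiv.swap_apply_def, h, h.le]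

theorem avoidsHat_213_iff {π : Equiv.Perm (Fin n)} :
    AvoidsHat (Equiv.swap (0 : Fin 3) 1) 1 π ↔ ∀ i j, i < j → π i < π j →
      ∃ c, (i < c ∧ c < j ∧ π c < π i) ∨ (c < i ∧ π i < π c ∧ π c < π j) := by
  constructor
  · intro H i j hij hπ
    obtain ⟨h, hocc, hr⟩ := H ![i, j] (by simp [Fin.strictMono_iff_lt_succ, hij])
      (reduction_12_iff.2 hπ)
    obtain ⟨h01, h12, h10, h02⟩ := isOcc_213_iff.1 hocc
    obtain ⟨a, rfl : h a = i⟩ := hr ⟨0, rfl⟩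
    obtain ⟨b, rfl : h b = j⟩ := hr ⟨1, rfl⟩
    have pairs : ∀ a b : Fin 3, a < b → (a = 0 ∧ b = 1) ∨ (a = 0 ∧ b = 2) ∨ (a = 1 ∧ b = 2) := by
      decide
    obtain ⟨rfl, rfl⟩ | ⟨rfl, rfl⟩ | ⟨rfl, rfl⟩ := pairs a b (hocc.1.lt_iff_lt.1 hij)
    · exact absurd hπ h10.not_gt
    · exact ⟨h 1, .inl ⟨h01, h12, h10⟩⟩
    · exact ⟨h 0, .inr ⟨h01, h10, h02⟩⟩
  · intro H g hg hord
    have hg01 : g 0 < g 1 := hg (by decide)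
    have hπ : π (g 0) < π (g 1) := reduction_12_iff.1 hord
    simp only [Set.range_subset_iff, Fin.forall_fin_two]
    obtain ⟨c, ⟨hic, hcj, hc⟩ | ⟨hci, hic, hcj⟩⟩ := H _ _ hg01 hπ
    · exact ⟨![g 0, c, g 1], isOcc_213_iff.2 ⟨hic, hcj, hc, hπ⟩, ⟨0, rfl⟩, ⟨2, rfl⟩⟩
    · exact ⟨![c, g 0, g 1], isOcc_213_iff.2 ⟨hci, hg01, hic, hcj⟩, ⟨1, rfl⟩, ⟨2, rfl⟩⟩

theorem avoidsHat_213_iff_forall_succ_ne {π : Equiv.Perm (Fin n)} (h132 : Avoids132 π) :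
    AvoidsHat (Equiv.swap (0 : Fin 3) 1) 1 π ↔
      ∀ i j : Fin n, (i : ℕ) + 1 = j → (π i : ℕ) + 1 ≠ π j := by
  rw [avoidsHat_213_iff]
  constructor
  · intro H i j hij hπ
    obtain ⟨c, hc⟩ := H i j (by omega) (by omega)
    omega
  · intro H i j hij hπ
    by_contra! hext
    -- If `(i, j)` does not extend, then `π i < π (i + 1) ≤ π j`, and the value `π i + 1` has no
    -- possible position other than `i + 1`.
    have hsucc : (i : ℕ) + 1 < n := by omega
    set i' : Fin n := ⟨i + 1, hsucc⟩ with hi'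
    have hii' : i < i' := Fin.lt_def.2 (Nat.lt_succ_self _)
    have hi'j : i' ≤ j := hij
    have hlt : π i < π i' := by
      obtain rfl | hne := hi'j.eq_or_lt
      · exact hπ
      · exact ((hext i').1 hii' hne).lt_of_ne (π.injective.ne hii'.ne)
    have hle : π i' ≤ π j := by
      obtain heq | hne := hi'j.eq_or_lt
      · exact (congrArg π heq).le
      · exact not_lt.1 fun h ↦ h132 ⟨i, i', j, hii', hne, hπ, h⟩
    obtain ⟨c, hc⟩ := π.surjective ⟨π i + 1, by omega⟩
    have hic : π i < π c := by rw [hc]; exact Fin.lt_def.2 (Nat.lt_succ_self _)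
    have hci' : π c < π i' := by
      refine lt_of_le_of_ne (by rw [hc]; exact hlt) fun h ↦ H i i' rfl ?_
      rw [← h, hc]
    obtain h | rfl | h := lt_trichotomy c i
    · exact ((hext c).2 h hic).not_gt (hci'.trans_le hle)
    · exact hic.false
    · have hi'c : i' < c := lt_of_le_of_ne h fun h ↦ hci'.ne' (congrArg π h)
      exact h132 ⟨i, i', c, hii', hi'c, hic, hci'⟩

/-- The one-line notation of `π`, with entries counted from `0`. -/
def oneLine (π : Equiv.Perm (Fin n)) : List ℕ :=
  ofFn fun i ↦ (π i : ℕ)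

theorem avoids132_iff_listAvoids132_oneLine {π : Equiv.Perm (Fin n)} :
    Avoids132 π ↔ ListAvoids132 (oneLine π) := by
  simp only [Avoids132, ListAvoids132, oneLine, triplewise_iff_getElem, length_ofFn,
    List.getElem_ofFn, Fin.val_fin_lt, not_exists]
  exact ⟨fun h i j k hij hjk hk hπ ↦ h ⟨i, by omega⟩ ⟨j, by omega⟩ ⟨k, hk⟩ ⟨hij, hjk, hπ⟩,
    fun h i j k ⟨hij, hjk, hπ⟩ ↦ h i j k hij hjk k.2 hπ⟩

theorem avoidsHat_213_iff_successionFree_oneLine {π : Equiv.Perm (Fin n)} (h132 : Avoids132 π) :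
    AvoidsHat (Equiv.swap (0 : Fin 3) 1) 1 π ↔ SuccessionFree (oneLine π) := by
  rw [avoidsHat_213_iff_forall_succ_ne h132, SuccessionFree, oneLine, isChain_ofFn]
  exact ⟨fun h i hi ↦ h _ _ rfl, fun h i ⟨j, hj⟩ hij ↦ by subst hij; exact h i hj⟩

theorem oneLine_injective : Function.Injective (oneLine (n := n)) := fun _ _ h ↦
  Equiv.ext fun i ↦ Fin.ext (congrFun (ofFn_injective h) i)

theorem oneLine_perm_range (π : Equiv.Perm (Fin n)) : oneLine π ~ range n := by
  have h := Equiv.Perm.ofFn_comp_perm π (Fin.val : Fin n → ℕ)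
  rwa [ofFn_eq_map (f := Fin.val), map_coe_finRange_eq_range] at h

theorem exists_oneLine_eq {l : List ℕ} (hl : l ~ range n) :
    ∃ π : Equiv.Perm (Fin n), oneLine π = l := by
  obtain rfl : l.length = n := by simpa using hl.length_eq
  let f (i : Fin l.length) : Fin l.length := ⟨l.get i, mem_range.1 (hl.mem_iff.1 (l.get_mem i))⟩
  have hf : Function.Injective f := fun i j hij ↦
    (hl.nodup_iff.2 nodup_range).injective_get (congrArg Fin.val hij)
  refine ⟨Equiv.ofBijective f (Finite.injective_iff_bijective.1 hf), ?_⟩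
  simp [oneLine, f]

end OneLine

theorem bijOn_oneLine (n : ℕ) : Set.BijOn oneLine
    {π : Equiv.Perm (Fin n) | Avoids132 π ∧ AvoidsHat (Equiv.swap (0 : Fin 3) 1) 1 π}
    {l | l ~ range n ∧ ListAvoids132 l ∧ SuccessionFree l} := by
  refine ⟨?_, oneLine_injective.injOn, ?_⟩
  · rintro π ⟨h132, hhat⟩
    exact ⟨oneLine_perm_range π, avoids132_iff_listAvoids132_oneLine.1 h132,
      (avoidsHat_213_iff_successionFree_oneLine h132).1 hhat⟩
  · rintro l ⟨hl, h132, hsucc⟩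
    obtain ⟨π, rfl⟩ := exists_oneLine_eq hl
    have h132 := avoids132_iff_listAvoids132_oneLine.2 h132
    exact ⟨π, ⟨h132, (avoidsHat_213_iff_successionFree_oneLine h132).2 hsucc⟩, rfl⟩

/-- Theorem `mot`. For every `n ≥ 0`, the number of Motzkin `n`-paths equals
the number of permutations of length `n + 1` avoiding `132` and the hatted pattern `21̂3`
(the pattern `213`, i.e. `Equiv.swap 0 1` in 0-indexed notation, with the entry `1` marked);
indeed there is a bijection between the two sets. -/
theorem stmt17 (n : ℕ) :
    Nat.card {w : List (Option Bool) | IsMotzkinWord n w}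
      = Nat.card {π : Equiv.Perm (Fin (n + 1)) |
          Avoids132 π ∧ AvoidsHat (Equiv.swap (0 : Fin 3) 1) 1 π} ∧
    Nonempty ({w : List (Option Bool) // IsMotzkinWord n w} ≃
      {π : Equiv.Perm (Fin (n + 1)) //
        Avoids132 π ∧ AvoidsHat (Equiv.swap (0 : Fin 3) 1) 1 π}) := by
  have words := (MotzkinTree.bijOn_word n).equiv
  have trees := ((bijOn_inorder132 (n + 1)).comp (MotzkinTree.bijOn_toBinaryTree n)).equiv
  have perms := (bijOn_oneLine (n + 1)).equiv
  have e := words.symm.trans (trees.trans perms.symm)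
  exact ⟨Nat.card_congr e, ⟨e⟩⟩
end

section
/- Consider the generating tree on the permutations avoiding 132 and containing no factor a(a+1): for such a permutation π of length n+1, call a site s ∈ {1, …, n+2} active if the permutation π^{↓s} obtained by inserting the value n+2 into position s of π again avoids 132 and contains no factor a(a+1). Then: (1) the leftmost site s = 1 is always active; (2) if π has exactly k active sites s_1 = 1 < s_2 < ⋯ < s_k, then π^{↓s_1} has exactly k+1 active sites, and for each u with 2 ≤ u ≤ k, π^{↓s_u} has exactly k−u+1 active sites. Consequently a node of the tree with label k (its number of active sites) produces children with labels (k+1), (k−1), (k−2), …, 2, 1, which is the Motzkin succession rule (Ω). -/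
/-- The list `l` (one-line notation) avoids the pattern 132. -/
def Av132L (l : List ℕ) : Prop :=
  ¬ ∃ a b c : Fin l.length, a < b ∧ b < c ∧ l.get a < l.get c ∧ l.get c < l.get b

/-- The list `l` contains no factor `a(a+1)`: no two adjacent consecutive numbers. -/
def NoAdjFactor (l : List ℕ) : Prop :=
  ∀ (i : ℕ) (h : i + 1 < l.length), l.get ⟨i + 1, h⟩ ≠ l.get ⟨i, by omega⟩ + 1

/-- The class of permutations coding the Motzkin generating tree: avoiding `132` and with no
two adjacent consecutive numbers. -/
def Good (l : List ℕ) : Prop := Av132L l ∧ NoAdjFactor l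

/-- The set of active sites of a permutation `l` of `{1, …, m+1}` (given in one-line notation):
the sites `s ∈ {1, …, m+2}` such that the permutation `l^{↓s}`, obtained by inserting the new
maximal value `m + 2` into the `s`-th site of `l`, again avoids `132` and has no factor
`a(a+1)`. -/
def activeSet (m : ℕ) (l : List ℕ) : Set ℕ :=
  {s | 1 ≤ s ∧ s ≤ m + 2 ∧ Good (l.insertIdx (s - 1) (m + 2))}

/-!
Call a position `p` of a word a cut if every entry before `p` is at least every entry after `p`.
Inserting a new maximum at `p` creates a pattern 132 unless `p` is a cut, and creates a factor
`a(a+1)` exactly when `p` comes right after the old maximum. That position is itself a cut of a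
132-avoiding word, so the label of a node is one less than its number of cuts. Inserting a new
maximum at `p` destroys all the nonzero cuts up to `p`, shifts those from `p` on by one, and
makes the cut at `p + 1` inactive: the active sites of the child are the leftmost one and one for
each cut `q > p` of the parent.
-/

section Cuts

variable {α : Type*} [Preorder α]

/-- The set of descending cuts of a word: the positions splitting it into a prefix and a suffix
such that every entry of the prefix is at least every entry of the suffix. These are the candidates
for active sites. A cut is encoded by the number `p` of entries before it, so it is the site
numbered `p + 1`. -/
def descendingCuts (l : List α) : Set ℕ :=
  {p | p ≤ l.length ∧ ∀ a ∈ l.take p, ∀ b ∈ l.drop p, b ≤ a}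

theorem finite_descendingCuts (l : List α) : (descendingCuts l).Finite :=
  (Set.finite_Iic l.length).subset fun _ hp => hp.1

theorem zero_mem_descendingCuts (l : List α) : 0 ∈ descendingCuts l := by
  simp [descendingCuts]

theorem ncard_descendingCuts_sep_pos_add_one (l : List α) :
    {q ∈ descendingCuts l | 0 < q}.ncard + 1 = (descendingCuts l).ncard := by
  rw [← Set.ncard_sdiff_singleton_add_one (zero_mem_descendingCuts l) (finite_descendingCuts l)]
  congr 2
  ext q
  simp [Nat.pos_iff_ne_zero]

theorem length_lt_of_mem_descendingCuts {u v : List α} {M : α} (hM : ∀ x ∈ u, x < M) {p : ℕ}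
    (hp : p ∈ descendingCuts (u ++ M :: v)) (hp0 : p ≠ 0) : u.length < p := by
  by_contra! hpu
  obtain ⟨a, ha⟩ : ∃ a, a ∈ u.take p := by
    apply List.exists_mem_of_length_pos
    rw [List.length_take]
    lia
  refine (hM a (List.mem_of_mem_take ha)).not_ge (hp.2 a ?_ M ?_)
  · rwa [List.take_append_of_le_length hpu]
  · simp [List.drop_append_of_le_length hpu]

theorem length_add_add_one_mem_descendingCuts_iff {u v : List α} {M : α} (hM : ∀ x ∈ v, x ≤ M)
    (r : ℕ) : u.length + r + 1 ∈ descendingCuts (u ++ M :: v) ↔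
      u.length + r ∈ descendingCuts (u ++ v) := by
  have hMdrop : ∀ b ∈ v.drop r, b ≤ M := fun b hb => hM b (List.mem_of_mem_drop hb)
  simp only [descendingCuts, Set.mem_ofPred_eq, add_assoc, List.take_length_add_append,
    List.drop_length_add_append, List.take_succ_cons, List.drop_succ_cons, List.length_append,
    List.length_cons, List.mem_append, List.mem_cons]
  grind

theorem descendingCuts_append_cons {u v : List α} {M : α} (hM : ∀ x ∈ u ++ v, x < M) :
    descendingCuts (u ++ M :: v) =
      insert 0 (Nat.succ '' {q ∈ descendingCuts (u ++ v) | u.length ≤ q}) := by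
  have hu : ∀ x ∈ u, x < M := fun x hx => hM x (List.mem_append_left v hx)
  have hv : ∀ x ∈ v, x ≤ M := fun x hx => (hM x (List.mem_append_right u hx)).le
  ext (_ | q)
  · simp [zero_mem_descendingCuts]
  · simp only [Set.mem_insert_iff, Nat.succ_ne_zero, false_or, Nat.succ_eq_add_one,
      Nat.succ_injective.mem_set_image, Set.mem_ofPred_eq]
    by_cases hq : u.length ≤ q
    · obtain ⟨r, rfl⟩ := Nat.exists_eq_add_of_le hq
      simpa using length_add_add_one_mem_descendingCuts_iff hv r
    · exact iff_of_false
        (fun h => hq (Nat.lt_succ_iff.1 (length_lt_of_mem_descendingCuts hu h (by simp))))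
        fun h => hq h.2

end Cuts

section Good

theorem av132L_iff_triplewise {l : List ℕ} :
    Av132L l ↔ l.Triplewise fun a b c => a < c → b ≤ c := by
  rw [List.triplewise_iff_getElem, Av132L]
  constructor
  · intro h i j k hij hjk hk hac
    by_contra! hcb
    exact h ⟨⟨i, by lia⟩, ⟨j, by lia⟩, ⟨k, hk⟩, hij, hjk, hac, hcb⟩
  · rintro h ⟨i, j, k, hij, hjk, hac, hcb⟩
    exact hcb.not_ge (h i j k hij hjk k.2 hac)

theorem noAdjFactor_iff_isChain {l : List ℕ} :
    NoAdjFactor l ↔ l.IsChain fun a b => b ≠ a + 1 := by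
  simp [NoAdjFactor, List.isChain_iff_getElem]

theorem av132L_append_cons_iff {u v : List ℕ} {M : ℕ} (hM : ∀ x ∈ u ++ v, x < M) :
    Av132L (u ++ M :: v) ↔ Av132L (u ++ v) ∧ ∀ a ∈ u, ∀ b ∈ v, b ≤ a := by
  obtain ⟨hu, hv⟩ := List.forall_mem_append.1 hM
  have hMv : v.Pairwise fun b c => M < c → b ≤ c :=
    List.pairwise_of_forall_mem_list fun _ _ c hc hMc => absurd hMc (hv c hc).not_gt
  have huM : u.Pairwise fun a b => a < M → b ≤ M :=
    List.pairwise_of_forall_mem_list fun _ _ b hb _ => (hu b hb).le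
  simp only [av132L_iff_triplewise, List.triplewise_append, List.triplewise_cons,
    List.pairwise_cons, List.mem_cons]
  grind

theorem noAdjFactor_append_cons_iff {u v : List ℕ} {k : ℕ} (huv : NoAdjFactor (u ++ v))
    (hk : ∀ x ∈ u ++ v, x ≤ k) :
    NoAdjFactor (u ++ (k + 1) :: v) ↔ k ∉ u.getLast? := by
  rw [noAdjFactor_iff_isChain, List.isChain_append] at huv ⊢
  rw [List.isChain_cons]
  have hv : ∀ y ∈ v.head?, y ≠ k + 1 + 1 := by
    intro y hy
    have := hk y (List.mem_append_right u (List.mem_of_mem_head? hy))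
    lia
  grind

theorem good_append_cons_iff {u v : List ℕ} {k : ℕ} (huv : Good (u ++ v))
    (hk : ∀ x ∈ u ++ v, x ≤ k) :
    Good (u ++ (k + 1) :: v) ↔ (∀ a ∈ u, ∀ b ∈ v, b ≤ a) ∧ k ∉ u.getLast? := by
  rw [Good, av132L_append_cons_iff fun x hx => Nat.lt_succ_of_le (hk x hx),
    noAdjFactor_append_cons_iff huv.2 hk, and_iff_right huv.1]

end Good

section Lists

variable {α : Type*}

theorem insertIdx_eq_take_append_cons_drop {l : List α} {p : ℕ} (hp : p ≤ l.length) (x : α) :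
    l.insertIdx p x = l.take p ++ x :: l.drop p := by
  induction l generalizing p with
  | nil => simp_all
  | cons a l ih => cases p <;> simp_all

theorem le_of_mem_append_cons [Preorder α] {u v : List α} {M : α} (hM : ∀ x ∈ u ++ v, x < M) :
    ∀ x ∈ u ++ M :: v, x ≤ M :=
  fun x hx => (List.mem_cons.1 (List.perm_middle.mem_iff.1 hx)).elim le_of_eq fun h => (hM x h).le

theorem mem_getLast?_take_append_cons_iff {u v : List α} {x : α} (hx : x ∉ u ++ v) {p : ℕ}
    (hp : p ≤ (u ++ x :: v).length) :
    x ∈ ((u ++ x :: v).take p).getLast? ↔ p = u.length + 1 := by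
  grind

theorem exists_append_cons_of_perm_range' {n : ℕ} {l : List ℕ}
    (hl : l.Perm (List.range' 1 (n + 1))) :
    ∃ u v, l = u ++ (n + 1) :: v ∧ (u ++ v).Perm (List.range' 1 n) := by
  obtain ⟨u, v, rfl⟩ : ∃ u v, l = u ++ (n + 1) :: v :=
    List.append_of_mem (hl.mem_iff.2 (by simp))
  refine ⟨u, v, rfl, ?_⟩
  have hrange : (List.range' 1 (n + 1)).Perm ((n + 1) :: List.range' 1 n) := by
    rw [List.range'_1_concat, add_comm 1 n]
    exact List.perm_append_singleton _ _
  exact (List.perm_middle.symm.trans (hl.trans hrange)).cons_inv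

end Lists

section ActiveSites

variable {m : ℕ}

theorem succ_mem_activeSet_iff {l : List ℕ} (hlen : l.length = m + 1) (hle : ∀ x ∈ l, x ≤ m + 1)
    (hl : Good l) {p : ℕ} :
    p + 1 ∈ activeSet m l ↔ p ∈ descendingCuts l ∧ m + 1 ∉ (l.take p).getLast? := by
  have hgood (hp : p ≤ l.length) : Good (l.insertIdx p (m + 2)) ↔
      (∀ a ∈ l.take p, ∀ b ∈ l.drop p, b ≤ a) ∧ m + 1 ∉ (l.take p).getLast? := by
    rw [insertIdx_eq_take_append_cons_drop hp]
    exact good_append_cons_iff (by rwa [List.take_append_drop]) (by rwa [List.take_append_drop])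
  have hbound : p + 1 ≤ m + 2 ↔ p ≤ l.length := by lia
  simp only [activeSet, descendingCuts, Set.mem_ofPred_eq, Nat.le_add_left, true_and,
    Nat.add_sub_cancel, hbound, and_assoc]
  exact and_congr_right hgood

theorem one_mem_activeSet {l : List ℕ} (hlen : l.length = m + 1) (hle : ∀ x ∈ l, x ≤ m + 1)
    (hl : Good l) : 1 ∈ activeSet m l :=
  (succ_mem_activeSet_iff hlen hle hl).2 ⟨zero_mem_descendingCuts l, by simp⟩

variable {u v : List ℕ}

theorem activeSet_append_cons (hlen : (u ++ v).length = m) (hlt : ∀ x ∈ u ++ v, x < m + 1)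
    (hgood : Good (u ++ (m + 1) :: v)) :
    activeSet m (u ++ (m + 1) :: v) =
      Nat.succ '' (descendingCuts (u ++ (m + 1) :: v) \ {u.length + 1}) := by
  ext (_ | p)
  · simp [activeSet]
  · rw [succ_mem_activeSet_iff (by grind) (le_of_mem_append_cons hlt) hgood,
      ← Nat.succ_eq_add_one,
      Nat.succ_injective.mem_set_image, Set.mem_sdiff, Set.mem_singleton_iff]
    exact and_congr_right fun hp =>
      not_congr (mem_getLast?_take_append_cons_iff (fun h => (hlt _ h).false) hp.1)

theorem ncard_activeSet_add_one (hlen : (u ++ v).length = m) (hlt : ∀ x ∈ u ++ v, x < m + 1)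
    (hgood : Good (u ++ (m + 1) :: v)) :
    (activeSet m (u ++ (m + 1) :: v)).ncard + 1 =
      (descendingCuts (u ++ (m + 1) :: v)).ncard := by
  have hcut : u.length + 1 ∈ descendingCuts (u ++ (m + 1) :: v) := by
    have hcut' : u.length ∈ descendingCuts (u ++ v) := by
      simpa [descendingCuts] using ((av132L_append_cons_iff hlt).1 hgood.1).2
    exact (length_add_add_one_mem_descendingCuts_iff
      (fun x hx => (hlt x (List.mem_append_right u hx)).le) 0).2 hcut'
  rw [activeSet_append_cons hlen hlt hgood, Set.ncard_image_of_injective _ Nat.succ_injective,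
    Set.ncard_sdiff_singleton_add_one hcut (finite_descendingCuts _)]

theorem ncard_activeSet_sep_lt {p : ℕ} (hlen : (u ++ v).length = m)
    (hlt : ∀ x ∈ u ++ v, x < m + 1) (hgood : Good (u ++ (m + 1) :: v)) (hp : u.length < p) :
    {t ∈ activeSet m (u ++ (m + 1) :: v) | p + 1 < t}.ncard =
      {q ∈ descendingCuts (u ++ (m + 1) :: v) | p < q}.ncard := by
  have himage : {t ∈ activeSet m (u ++ (m + 1) :: v) | p + 1 < t} =
      Nat.succ '' {q ∈ descendingCuts (u ++ (m + 1) :: v) | p < q} := by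
    rw [activeSet_append_cons hlen hlt hgood]
    ext (_ | q)
    · simp
    · simp only [Set.mem_ofPred_eq, ← Nat.succ_eq_add_one, Nat.succ_injective.mem_set_image,
        Set.mem_sdiff, Set.mem_singleton_iff]
      lia
  rw [himage, Set.ncard_image_of_injective _ Nat.succ_injective]

theorem ncard_activeSet_append_cons (hlen : (u ++ v).length = m)
    (hlt : ∀ x ∈ u ++ v, x < m + 1) (hgood : Good (u ++ (m + 1) :: v)) :
    (activeSet m (u ++ (m + 1) :: v)).ncard =
      {q ∈ descendingCuts (u ++ v) | u.length < q}.ncard + 1 := by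
  have hcuts : descendingCuts (u ++ (m + 1) :: v) \ {u.length + 1} =
      insert 0 (Nat.succ '' {q ∈ descendingCuts (u ++ v) | u.length < q}) := by
    rw [descendingCuts_append_cons hlt]
    ext (_ | q)
    · simp
    · simp only [Set.mem_sdiff, Set.mem_singleton_iff, Set.mem_insert_iff, Nat.succ_ne_zero,
        false_or, ← Nat.succ_eq_add_one, Nat.succ_injective.mem_set_image, Set.mem_ofPred_eq]
      lia
  have hfin : {q ∈ descendingCuts (u ++ v) | u.length < q}.Finite :=
    (finite_descendingCuts _).subset (Set.sep_subset _ _)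
  rw [activeSet_append_cons hlen hlt hgood, hcuts,
    Set.ncard_image_of_injective _ Nat.succ_injective,
    Set.ncard_insert_of_notMem (by simp) (hfin.image _),
    Set.ncard_image_of_injective _ Nat.succ_injective]

theorem ncard_activeSet_insertIdx {l : List ℕ} {p : ℕ} (hlen : l.length = m + 1)
    (hle : ∀ x ∈ l, x ≤ m + 1) (hp : p + 1 ∈ activeSet m l) :
    (activeSet (m + 1) (l.insertIdx p (m + 2))).ncard =
      {q ∈ descendingCuts l | p < q}.ncard + 1 := by
  obtain ⟨-, hpm, hgood⟩ := hp
  have hpl : p ≤ l.length := by lia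
  rw [Nat.add_sub_cancel, insertIdx_eq_take_append_cons_drop hpl] at hgood
  rw [insertIdx_eq_take_append_cons_drop hpl]
  have := ncard_activeSet_append_cons (by rwa [List.take_append_drop])
    (by rw [List.take_append_drop]; exact fun x hx => Nat.lt_succ_of_le (hle x hx)) hgood
  rwa [List.take_append_drop, List.length_take_of_le hpl] at this

end ActiveSites

/-- Let `l` be a permutation of `{1, …, n+1}` avoiding `132` and with no
factor `a(a+1)`. Then: (1) the leftmost site `s = 1` is always active; (2) if `l` has exactly
`k` active sites, then inserting at site `1` yields a permutation with exactly `k + 1` active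
sites, and inserting at the `u`-th active site `s_u` (for `2 ≤ u ≤ k`, where
`u = #{t active : t ≤ s_u}`) yields a permutation with exactly `k − u + 1` active sites. This is
the Motzkin succession rule `(k) ⇝ (k+1)(k−1)(k−2)⋯(2)(1)`. -/
theorem stmt18 (n : ℕ) (l : List ℕ) (hperm : l.Perm (List.range' 1 (n + 1))) (hgood : Good l) :
    1 ∈ activeSet n l ∧
    (activeSet (n + 1) (l.insertIdx 0 (n + 2))).ncard = (activeSet n l).ncard + 1 ∧
    (∀ s ∈ activeSet n l, 1 < s →
      (activeSet (n + 1) (l.insertIdx (s - 1) (n + 2))).ncard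
        = (activeSet n l).ncard - {t ∈ activeSet n l | t ≤ s}.ncard + 1) := by
  obtain ⟨u, v, rfl, huv⟩ := exists_append_cons_of_perm_range' hperm
  have hlen : (u ++ v).length = n := by simpa using huv.length_eq
  have hlt : ∀ x ∈ u ++ v, x < n + 1 := fun x hx => by
    simpa [add_comm] using (List.mem_range'_1.1 (huv.mem_iff.1 hx)).2
  have hlen' : (u ++ (n + 1) :: v).length = n + 1 := by simpa using hperm.length_eq
  have hle := le_of_mem_append_cons hlt
  have hone := one_mem_activeSet hlen' hle hgood
  refine ⟨hone, ?_, fun s hs hs1 => ?_⟩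
  · rw [ncard_activeSet_insertIdx hlen' hle hone, ncard_descendingCuts_sep_pos_add_one,
      ncard_activeSet_add_one hlen hlt hgood]
  · obtain ⟨p, rfl⟩ := Nat.exists_eq_add_of_le' hs.1
    have hp : u.length < p := length_lt_of_mem_descendingCuts
      (fun x hx => hlt x (List.mem_append_left v hx))
      ((succ_mem_activeSet_iff hlen' hle hgood).1 hs).1 (by lia)
    have hfin : (activeSet n (u ++ (n + 1) :: v)).Finite :=
      (Set.finite_Iic (n + 2)).subset fun t ht => ht.2.1
    rw [Nat.add_sub_cancel, ncard_activeSet_insertIdx hlen' hle hs,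
      ← ncard_activeSet_sep_lt hlen hlt hgood hp,
      ← Set.ncard_sdiff (Set.sep_subset _ _) (hfin.subset (Set.sep_subset _ _))]
    congr 2
    ext t
    grind
end
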